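/- Let K : ℝ → ℝ be continuous, let a, b be scalar Jacobi fields for K whose Wronskian is nonzero at some point, and let c be a nontrivial scalar Jacobi field for K with c(t₁) = c(t₂) = 0, where t₁ ≠ t₂. Then c'(t₁) ≠ 0, c'(t₂) ≠ 0, c'(t₁)·a(t₁) = c'(t₂)·a(t₂), and c'(t₁)·b(t₁) = c'(t₂)·b(t₂). In particular, for any λ ≠ 0 the numbers λ₁ := λ·c'(t₁) and λ₂ := λ·c'(t₂) are nonzero and satisfy λ₁·a(t₁) = λ₂·a(t₂) and λ₁·b(t₁) = λ₂·b(t₂). -/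

import Mathlib

/-- A scalar Jacobi field for the curvature function `K` is a `C²` function `c : ℝ → ℝ`
satisfying `c'' + K c = 0`. -/
def IsJacobiField (K : ℝ → ℝ) (c : ℝ → ℝ) : Prop :=
  ContDiff ℝ 2 c ∧ ∀ t : ℝ, deriv (deriv c) t + K t * c t = 0

/-!
The Wronskian of two Jacobi fields is constant. At a zero of `c` the Wronskian of `a` and `c`
reduces to `c' a`, so this product takes the same value at all zeros of `c`. A common zero of `c`
and `c'` is excluded by uniqueness for the linear system satisfied by `(c, c')`.
-/

section Wronskian

variable {𝕜 : Type*} [NontriviallyNormedField 𝕜] {f g : 𝕜 → 𝕜} {t : 𝕜}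

/-- The Wronskian `f g' - f' g`, whose constancy relates the values of Jacobi fields at different
times. The derivatives are those of `deriv`, hence `0` where `f` or `g` is not differentiable. -/
noncomputable def wronskian (f g : 𝕜 → 𝕜) (t : 𝕜) : 𝕜 :=
  f t * deriv g t - deriv f t * g t

lemma wronskian_of_right_eq_zero (h : g t = 0) : wronskian f g t = deriv g t * f t := by
  rw [wronskian, h, mul_zero, sub_zero, mul_comm]

lemma hasDerivAt_wronskian (hf : DifferentiableAt 𝕜 f t) (hg : DifferentiableAt 𝕜 g t)
    (hf' : DifferentiableAt 𝕜 (deriv f) t) (hg' : DifferentiableAt 𝕜 (deriv g) t) :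
    HasDerivAt (wronskian f g) (f t * deriv (deriv g) t - deriv (deriv f) t * g t) t :=
  ((hf.hasDerivAt.mul hg'.hasDerivAt).sub (hf'.hasDerivAt.mul hg.hasDerivAt)).congr_deriv (by ring)

end Wronskian

/-- The time-dependent vector field on the phase plane whose integral curves are the pairs
`(c, c')` with `c'' + K c = 0`; it turns the Jacobi equation into a first-order system. -/
def jacobiVectorField (K : ℝ → ℝ) (t : ℝ) (y : ℝ × ℝ) : ℝ × ℝ :=
  (y.2, -K t * y.1)

lemma lipschitzWith_jacobiVectorField (K : ℝ → ℝ) (t : ℝ) :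
    LipschitzWith (max 1 ‖K t‖₊) (jacobiVectorField K t) := by
  have h : LipschitzWith ‖K t‖₊ fun y : ℝ × ℝ => -K t * y.1 := by
    rw [← nnnorm_neg, ← mul_one ‖-K t‖₊]
    exact (lipschitzWith_smul (-K t)).comp LipschitzWith.prod_fst
  exact LipschitzWith.prod_snd.prodMk h

namespace IsJacobiField

variable {K f g c : ℝ → ℝ}

lemma zero : IsJacobiField K 0 :=
  ⟨contDiff_const, fun t => by simp⟩

lemma differentiable (hf : IsJacobiField K f) : Differentiable ℝ f :=
  hf.1.differentiable two_ne_zero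

lemma differentiable_deriv (hf : IsJacobiField K f) : Differentiable ℝ (deriv f) :=
  hf.1.differentiable_deriv_two

lemma deriv_deriv (hf : IsJacobiField K f) (t : ℝ) : deriv (deriv f) t = -K t * f t := by
  linear_combination hf.2 t

lemma hasDerivAt_prodMk_deriv (hf : IsJacobiField K f) (t : ℝ) :
    HasDerivAt (fun s => (f s, deriv f s)) (jacobiVectorField K t (f t, deriv f t)) t := by
  have hf' : HasDerivAt (deriv f) (-K t * f t) t :=
    hf.deriv_deriv t ▸ (hf.differentiable_deriv t).hasDerivAt
  exact (hf.differentiable t).hasDerivAt.prodMk hf'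

theorem eq_of_eq_of_deriv_eq (hK : Continuous K) (hf : IsJacobiField K f) (hg : IsJacobiField K g)
    {t₀ : ℝ} (h : f t₀ = g t₀) (h' : deriv f t₀ = deriv g t₀) : f = g := by
  funext t
  obtain ⟨l, hl⟩ := exists_lt (min t₀ t)
  obtain ⟨u, hu⟩ := exists_gt (max t₀ t)
  rw [lt_min_iff] at hl
  rw [max_lt_iff] at hu
  obtain ⟨C, hC⟩ : BddAbove ((fun s => max 1 ‖K s‖₊) '' Set.Icc l u) :=
    isCompact_Icc.bddAbove_image (by fun_prop)
  have hlip : ∀ s ∈ Set.Ioo l u, LipschitzOnWith C (jacobiVectorField K s) Set.univ :=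
    fun s hs => ((lipschitzWith_jacobiVectorField K s).weaken
      (hC (Set.mem_image_of_mem _ (Set.Ioo_subset_Icc_self hs)))).lipschitzOnWith
  have heq : Set.EqOn (fun s => (f s, deriv f s)) (fun s => (g s, deriv g s)) (Set.Ioo l u) :=
    ODE_solution_unique_of_mem_Ioo hlip ⟨hl.1, hu.1⟩
      (fun s _ => ⟨hf.hasDerivAt_prodMk_deriv s, Set.mem_univ _⟩)
      (fun s _ => ⟨hg.hasDerivAt_prodMk_deriv s, Set.mem_univ _⟩) (Prod.ext h h')
  exact congrArg Prod.fst (heq ⟨hl.2, hu.2⟩)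

theorem deriv_ne_zero_of_eq_zero (hK : Continuous K) (hc : IsJacobiField K c)
    (hne : ¬ ∀ t, c t = 0) {t : ℝ} (h : c t = 0) : deriv c t ≠ 0 := by
  intro h'
  have hc0 : c = 0 := hc.eq_of_eq_of_deriv_eq hK zero h (by simpa using h')
  exact hne (congrFun hc0)

theorem wronskian_eq (hf : IsJacobiField K f) (hg : IsJacobiField K g) (s t : ℝ) :
    wronskian f g s = wronskian f g t := by
  have hW : ∀ x, HasDerivAt (wronskian f g) 0 x := fun x =>
    (hasDerivAt_wronskian (hf.differentiable x) (hg.differentiable x)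
      (hf.differentiable_deriv x) (hg.differentiable_deriv x)).congr_deriv
      (by rw [hf.deriv_deriv, hg.deriv_deriv]; ring)
  exact is_const_of_deriv_eq_zero (fun x => (hW x).differentiableAt) (fun x => (hW x).deriv) s t

theorem deriv_mul_eq_deriv_mul (hc : IsJacobiField K c) (hf : IsJacobiField K f) {t₁ t₂ : ℝ}
    (h₁ : c t₁ = 0) (h₂ : c t₂ = 0) : deriv c t₁ * f t₁ = deriv c t₂ * f t₂ := by
  rw [← wronskian_of_right_eq_zero h₁, ← wronskian_of_right_eq_zero h₂]
  exact hf.wronskian_eq hc t₁ t₂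

end IsJacobiField

theorem equal_projections_from_conjugate_points_general (K a b c : ℝ → ℝ) (hK : Continuous K)
    (ha : IsJacobiField K a) (hb : IsJacobiField K b)
    (hc : IsJacobiField K c) (hcne : ¬ ∀ t : ℝ, c t = 0)
    (t₁ t₂ : ℝ) (h1 : c t₁ = 0) (h2 : c t₂ = 0) :
    deriv c t₁ ≠ 0 ∧ deriv c t₂ ≠ 0 ∧
    deriv c t₁ * a t₁ = deriv c t₂ * a t₂ ∧
    deriv c t₁ * b t₁ = deriv c t₂ * b t₂ ∧
    ∀ l : ℝ, l ≠ 0 →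
      l * deriv c t₁ ≠ 0 ∧ l * deriv c t₂ ≠ 0 ∧
      (l * deriv c t₁) * a t₁ = (l * deriv c t₂) * a t₂ ∧
      (l * deriv c t₁) * b t₁ = (l * deriv c t₂) * b t₂ := by
  have hc₁ : deriv c t₁ ≠ 0 := hc.deriv_ne_zero_of_eq_zero hK hcne h1
  have hc₂ : deriv c t₂ ≠ 0 := hc.deriv_ne_zero_of_eq_zero hK hcne h2
  have hac : deriv c t₁ * a t₁ = deriv c t₂ * a t₂ := hc.deriv_mul_eq_deriv_mul ha h1 h2
  have hbc : deriv c t₁ * b t₁ = deriv c t₂ * b t₂ := hc.deriv_mul_eq_deriv_mul hb h1 h2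
  refine ⟨hc₁, hc₂, hac, hbc, fun l hl => ⟨mul_ne_zero hl hc₁, mul_ne_zero hl hc₂, ?_, ?_⟩⟩
  · simp only [mul_assoc, hac]
  · simp only [mul_assoc, hbc]

/-- If a nontrivial Jacobi field `c` vanishes at `t₁ ≠ t₂`, then `c'(t₁) ≠ 0`,
`c'(t₂) ≠ 0`, and `c'(t₁) a(t₁) = c'(t₂) a(t₂)`, `c'(t₁) b(t₁) = c'(t₂) b(t₂)`;
in particular for any `λ ≠ 0` the nonzero numbers `λ₁ = λ c'(t₁)`, `λ₂ = λ c'(t₂)`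
satisfy `λ₁ a(t₁) = λ₂ a(t₂)` and `λ₁ b(t₁) = λ₂ b(t₂)`. -/
theorem equal_projections_from_conjugate_points (K a b c : ℝ → ℝ) (hK : Continuous K)
    (ha : IsJacobiField K a) (hb : IsJacobiField K b)
    (hW : ∃ t₀ : ℝ, a t₀ * deriv b t₀ - deriv a t₀ * b t₀ ≠ 0)
    (hc : IsJacobiField K c) (hcne : ¬ ∀ t : ℝ, c t = 0)
    (t₁ t₂ : ℝ) (ht : t₁ ≠ t₂) (h1 : c t₁ = 0) (h2 : c t₂ = 0) :
    deriv c t₁ ≠ 0 ∧ deriv c t₂ ≠ 0 ∧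
    deriv c t₁ * a t₁ = deriv c t₂ * a t₂ ∧
    deriv c t₁ * b t₁ = deriv c t₂ * b t₂ ∧
    ∀ l : ℝ, l ≠ 0 →
      l * deriv c t₁ ≠ 0 ∧ l * deriv c t₂ ≠ 0 ∧
      (l * deriv c t₁) * a t₁ = (l * deriv c t₂) * a t₂ ∧
      (l * deriv c t₁) * b t₁ = (l * deriv c t₂) * b t₂ :=
  equal_projections_from_conjugate_points_general K a b c hK ha hb hc hcne t₁ t₂ h1 h2
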